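/- The four-qubit analogue of the quantum Bell–Wigner inequality fails: let Ψ = (e_{0000} + e_{1100})/√2 ∈ ℂ^{16} and ρ = |Ψ⟩⟨Ψ| (the rank-one projection onto Ψ), and define Δ_1 = ρ_1 − ρ_{12} − ρ_{13} − ρ_{14} + ρ_{123} + ρ_{124} + ρ_{134}, where each reduced state is viewed as an operator on ℂ^{16}. Then for v = (e_{0011} + e_{1111})/√2, one has Δ_1 v = −(1/2) v; in particular ⟨v, Δ_1 v⟩ = −1/2 < 0, so Δ_1 is not positive semidefinite. -/

import Mathlib

open scoped Matrix ComplexOrder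

/-- The reduced state `ρ_A` of an `n`-qubit state `ρ`, viewed as an operator on
`(ℂ²)^{⊗n}`: `ρ_A[x,y] = (Π_{j∉A} δ_{x_j,y_j}) · Σ_w ρ[u(x,w), u(y,w)]`, where `w`
ranges over assignments of values to the coordinates outside `A` and `u(x,w)` agrees
with `x` on `A` and with `w` outside `A`. -/
noncomputable def qreduce {n : ℕ} (A : Finset (Fin n))
    (ρ : Matrix (Fin n → Bool) (Fin n → Bool) ℂ) :
    Matrix (Fin n → Bool) (Fin n → Bool) ℂ :=
  Matrix.of fun x y =>
    (if ∀ j, j ∉ A → x j = y j then (1 : ℂ) else 0) *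
      ∑ w ∈ Finset.univ.filter (fun w : Fin n → Bool => ∀ i, i ∈ A → w i = x i),
        ρ w (fun i => if i ∈ A then y i else w i)

/-- The four-qubit state `Ψ = (e₀₀₀₀ + e₁₁₀₀)/√2`. -/
noncomputable def psi4 : (Fin 4 → Bool) → ℂ :=
  fun x => ((if x = (fun _ => false) then 1 else 0)
      + (if x = (fun i : Fin 4 => decide (i.val < 2)) then 1 else 0)) / (Real.sqrt 2 : ℂ)

/-- The vector `v = (e₀₀₁₁ + e₁₁₁₁)/√2`. -/
noncomputable def v4 : (Fin 4 → Bool) → ℂ :=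
  fun x => ((if x = (fun i : Fin 4 => decide (2 ≤ i.val)) then 1 else 0)
      + (if x = (fun _ => true) then 1 else 0)) / (Real.sqrt 2 : ℂ)

/-!
The state `Ψ` is a Bell pair on the first two qubits times `e₀₀` on the last two, whereas `v` is the
same Bell pair times `e₁₁`. Hence `ρ_A v = 0` as soon as `A` meets the last two qubits, which kills
five of the seven terms of `Δ₁ v`. The other two are `ρ_{12} v = v`, because the Bell pair is pure,
and `ρ_1 v = v / 2`, because each half of it is maximally mixed; so `Δ₁ v = v / 2 - v`.
-/

section Superposition

/-- The rank-one operator `|φ⟩⟨φ|`, that is, the density matrix of the pure state `φ`. -/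
noncomputable def pureState {ι : Type*} (φ : ι → ℂ) : Matrix ι ι ℂ :=
  Matrix.vecMulVec φ (star φ)

variable {ι : Type*} [DecidableEq ι]

/-- The superposition `(e_s + e_t)/√2` of two standard basis vectors, a unit vector for `s ≠ t`.
Both `Ψ` and `v` have this form. -/
noncomputable def superposition (s t : ι) : ι → ℂ :=
  (Real.sqrt 2 : ℂ)⁻¹ • (Pi.single s 1 + Pi.single t 1)

lemma superposition_comm (s t : ι) : superposition s t = superposition t s := by
  rw [superposition, add_comm, superposition]

lemma star_superposition (s t : ι) : star (superposition s t) = superposition s t := by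
  simp [superposition]

lemma inv_sqrt_two_mul_self : (Real.sqrt 2 : ℂ)⁻¹ * (Real.sqrt 2 : ℂ)⁻¹ = 1 / 2 := by
  rw [← mul_inv, ← Complex.ofReal_mul, Real.mul_self_sqrt zero_le_two]
  norm_num

lemma star_superposition_dotProduct_self [Fintype ι] {s t : ι} (hst : s ≠ t) :
    star (superposition s t) ⬝ᵥ superposition s t = 1 := by
  rw [star_superposition, superposition, smul_dotProduct, dotProduct_smul, smul_smul,
    inv_sqrt_two_mul_self]
  norm_num [hst, hst.symm]

lemma pureState_superposition (s t : ι) :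
    pureState (superposition s t) =
      (1 / 2 : ℂ) • (Matrix.single s s 1 + Matrix.single t s 1 +
        (Matrix.single s t 1 + Matrix.single t t 1)) := by
  rw [pureState, star_superposition, superposition, Matrix.smul_vecMulVec, Matrix.vecMulVec_smul,
    smul_smul, inv_sqrt_two_mul_self]
  simp only [Matrix.add_vecMulVec, Matrix.vecMulVec_add, ← Matrix.single_eq_single_vecMulVec_single]

lemma mulVec_superposition [Fintype ι] (M : Matrix ι ι ℂ) (s t : ι) :
    M *ᵥ superposition s t =
      (Real.sqrt 2 : ℂ)⁻¹ • (M *ᵥ Pi.single s 1 + M *ᵥ Pi.single t 1) := by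
  rw [superposition, Matrix.mulVec_smul, Matrix.mulVec_add]

end Superposition

lemma finset_piecewise_eq_iff {ι : Type*} {π : ι → Sort*} {A : Finset ι} [∀ j, Decidable (j ∈ A)]
    {f g h : ∀ j, π j} :
    A.piecewise f g = h ↔ (∀ j ∈ A, f j = h j) ∧ ∀ j ∉ A, g j = h j := by
  refine ⟨?_, fun ⟨hf, hg⟩ => (A.piecewise_congr hf hg).trans (A.piecewise_same h)⟩
  rintro rfl
  exact ⟨fun j hj => by rw [A.piecewise_eq_of_mem _ _ hj],
    fun j hj => by rw [A.piecewise_eq_of_notMem _ _ hj]⟩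

section Reduction

variable {n : ℕ} {A : Finset (Fin n)}

lemma qreduce_add (ρ σ : Matrix (Fin n → Bool) (Fin n → Bool) ℂ) :
    qreduce A (ρ + σ) = qreduce A ρ + qreduce A σ := by
  ext x y
  simp only [qreduce, Matrix.of_apply, Matrix.add_apply, Finset.sum_add_distrib, mul_add]

lemma qreduce_smul (c : ℂ) (ρ : Matrix (Fin n → Bool) (Fin n → Bool) ℂ) :
    qreduce A (c • ρ) = c • qreduce A ρ := by
  ext x y
  simp only [qreduce, Matrix.of_apply, Matrix.smul_apply, smul_eq_mul, ← Finset.mul_sum,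
    mul_left_comm]

lemma qreduce_single_mulVec_single (s t u : Fin n → Bool) :
    qreduce A (Matrix.single s t 1) *ᵥ Pi.single u 1 =
      if (∀ j ∈ A, u j = t j) ∧ ∀ j ∉ A, s j = t j then Pi.single (A.piecewise s u) 1 else 0 := by
  ext x
  have hsum : ∑ w with ∀ i ∈ A, w i = x i,
      Matrix.single s t (1 : ℂ) w (fun i => if i ∈ A then u i else w i) =
        if (∀ i ∈ A, s i = x i) ∧ A.piecewise u s = t then 1 else 0 := by
    simp only [Matrix.single_apply, ite_and, Finset.sum_ite_eq, Finset.mem_filter_univ]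
    exact if_congr Iff.rfl (if_congr eq_comm rfl rfl) rfl
  simp only [Matrix.mulVec_single_one, Matrix.col_apply, qreduce, Matrix.of_apply, hsum,
    ite_apply, Pi.single_apply, Pi.zero_apply, eq_comm (a := x), finset_piecewise_eq_iff,
    mul_ite, mul_one, mul_zero, ← ite_and]
  exact if_congr (by grind) rfl rfl

variable {s t u v : Fin n → Bool}

lemma qreduce_pureState_superposition_mulVec_single (hst : ∃ j ∈ A, s j ≠ t j)
    (hus : ∀ j ∈ A, u j = s j) :
    qreduce A (pureState (superposition s t)) *ᵥ Pi.single u 1 =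
      (1 / 2 : ℂ) • (Pi.single u 1 +
        if ∀ j ∉ A, s j = t j then Pi.single (A.piecewise t u) 1 else 0) := by
  have hut : ¬ ∀ j ∈ A, u j = t j := by
    obtain ⟨j, hj, hst⟩ := hst
    exact fun h => hst ((hus j hj).symm.trans (h j hj))
  have hsu : A.piecewise s u = u :=
    finset_piecewise_eq_iff.2 ⟨fun j hj => (hus j hj).symm, fun _ _ => rfl⟩
  simp only [pureState_superposition, qreduce_smul, qreduce_add, Matrix.smul_mulVec,
    Matrix.add_mulVec, qreduce_single_mulVec_single, eq_true hus, hut, hsu, implies_true, true_and,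
    false_and, if_true, if_false, add_zero, eq_comm (a := t _)]

lemma qreduce_pureState_superposition_mulVec_single_eq_half_smul (hA : ∃ j ∈ A, s j ≠ t j)
    (hAc : ∃ j ∉ A, s j ≠ t j) (hus : ∀ j ∈ A, u j = s j) :
    qreduce A (pureState (superposition s t)) *ᵥ Pi.single u 1 = (1 / 2 : ℂ) • Pi.single u 1 := by
  rw [qreduce_pureState_superposition_mulVec_single hA hus,
    if_neg fun h => hAc.elim fun j hj => hj.2 (h j hj.1), add_zero]

lemma qreduce_pureState_superposition_mulVec_eq_half_smul (hA : ∃ j ∈ A, s j ≠ t j)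
    (hAc : ∃ j ∉ A, s j ≠ t j) (hus : ∀ j ∈ A, u j = s j) (hvt : ∀ j ∈ A, v j = t j) :
    qreduce A (pureState (superposition s t)) *ᵥ superposition u v =
      (1 / 2 : ℂ) • superposition u v := by
  have hu := qreduce_pureState_superposition_mulVec_single_eq_half_smul hA hAc hus
  have hv := qreduce_pureState_superposition_mulVec_single_eq_half_smul
    (hA.imp fun _ => And.imp_right Ne.symm) (hAc.imp fun _ => And.imp_right Ne.symm) hvt
  rw [superposition_comm t s] at hv
  rw [mulVec_superposition, hu, hv, ← smul_add, smul_comm, superposition]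

lemma qreduce_pureState_superposition_mulVec_eq_self (hA : ∃ j ∈ A, s j ≠ t j)
    (hAc : ∀ j ∉ A, s j = t j) (hus : ∀ j ∈ A, u j = s j) (hvt : ∀ j ∈ A, v j = t j)
    (huv : ∀ j ∉ A, u j = v j) :
    qreduce A (pureState (superposition s t)) *ᵥ superposition u v = superposition u v := by
  have htu : A.piecewise t u = v := finset_piecewise_eq_iff.2 ⟨fun j hj => (hvt j hj).symm, huv⟩
  have hsv : A.piecewise s v = u :=
    finset_piecewise_eq_iff.2 ⟨fun j hj => (hus j hj).symm, fun j hj => (huv j hj).symm⟩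
  have hu := qreduce_pureState_superposition_mulVec_single hA hus
  have hv := qreduce_pureState_superposition_mulVec_single
    (hA.imp fun _ => And.imp_right Ne.symm) hvt
  rw [if_pos hAc, htu] at hu
  rw [if_pos fun j hj => (hAc j hj).symm, hsv, superposition_comm t s] at hv
  rw [mulVec_superposition, hu, hv, superposition]
  module

lemma qreduce_pureState_superposition_mulVec_eq_zero {j : Fin n} (hj : j ∈ A)
    (hus : u j ≠ s j) (hut : u j ≠ t j) (hvs : v j ≠ s j) (hvt : v j ≠ t j) :
    qreduce A (pureState (superposition s t)) *ᵥ superposition u v = 0 := by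
  have not_eqOn {w z : Fin n → Bool} (h : w j ≠ z j) : ¬ ∀ i ∈ A, w i = z i :=
    fun hwz => h (hwz j hj)
  simp only [mulVec_superposition, pureState_superposition, qreduce_smul, qreduce_add,
    Matrix.smul_mulVec, Matrix.add_mulVec, qreduce_single_mulVec_single, not_eqOn hus,
    not_eqOn hut, not_eqOn hvs, not_eqOn hvt, false_and, if_false, add_zero, smul_zero]

end Reduction

section FourQubits

lemma psi4_eq_superposition :
    psi4 = superposition (fun _ => false) (fun i => decide (i.val < 2)) := by
  ext x
  simp [psi4, superposition, Pi.single_apply, div_eq_inv_mul]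

lemma v4_eq_superposition :
    v4 = superposition (fun i => decide (2 ≤ i.val)) (fun _ => true) := by
  ext x
  simp [v4, superposition, Pi.single_apply, div_eq_inv_mul]

lemma star_v4_dotProduct_v4 : star v4 ⬝ᵥ v4 = 1 := by
  rw [v4_eq_superposition]
  exact star_superposition_dotProduct_self (by decide)

lemma qreduce_psi4_mulVec_v4_eq_zero {A : Finset (Fin 4)} (hA : ∃ j ∈ A, 2 ≤ j.val) :
    qreduce A (pureState psi4) *ᵥ v4 = 0 := by
  obtain ⟨j, hjA, hj⟩ := hA
  rw [psi4_eq_superposition, v4_eq_superposition]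
  apply qreduce_pureState_superposition_mulVec_eq_zero hjA <;> simp [hj, hj.not_gt]

lemma qreduce_zero_psi4_mulVec_v4 :
    qreduce {0} (pureState psi4) *ᵥ v4 = (1 / 2 : ℂ) • v4 := by
  rw [psi4_eq_superposition, v4_eq_superposition]
  apply qreduce_pureState_superposition_mulVec_eq_half_smul <;> decide

lemma qreduce_zero_one_psi4_mulVec_v4 : qreduce {0, 1} (pureState psi4) *ᵥ v4 = v4 := by
  rw [psi4_eq_superposition, v4_eq_superposition]
  apply qreduce_pureState_superposition_mulVec_eq_self <;> decide

end FourQubits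

/-- The four-qubit analogue of the quantum Bell–Wigner inequality
fails: for `ρ = |Ψ⟩⟨Ψ|` with `Ψ = (e₀₀₀₀ + e₁₁₀₀)/√2` and
`Δ₁ = ρ_1 - ρ_{12} - ρ_{13} - ρ_{14} + ρ_{123} + ρ_{124} + ρ_{134}`, the vector
`v = (e₀₀₁₁ + e₁₁₁₁)/√2` satisfies `Δ₁ v = -(1/2) v`; in particular
`⟨v, Δ₁ v⟩ = -1/2 < 0` and `Δ₁` is not positive semidefinite. -/
theorem stmt_13 (ρ : Matrix (Fin 4 → Bool) (Fin 4 → Bool) ℂ)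
    (hρ : ρ = Matrix.of fun x y => psi4 x * (starRingEnd ℂ) (psi4 y))
    (Δ₁ : Matrix (Fin 4 → Bool) (Fin 4 → Bool) ℂ)
    (hΔ₁ : Δ₁ = qreduce {0} ρ - qreduce {0, 1} ρ - qreduce {0, 2} ρ - qreduce {0, 3} ρ
        + qreduce {0, 1, 2} ρ + qreduce {0, 1, 3} ρ + qreduce {0, 2, 3} ρ) :
    Δ₁.mulVec v4 = (-(1 / 2) : ℂ) • v4 ∧
    star v4 ⬝ᵥ Δ₁.mulVec v4 = -(1 / 2) ∧
    ¬ Δ₁.PosSemidef := by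
  have hΨ : ρ = pureState psi4 := hρ
  have vanishes (A : Finset (Fin 4)) (hA : ∃ j ∈ A, 2 ≤ j.val) : qreduce A ρ *ᵥ v4 = 0 :=
    hΨ ▸ qreduce_psi4_mulVec_v4_eq_zero hA
  have eigenvector : Δ₁ *ᵥ v4 = (-(1 / 2) : ℂ) • v4 := by
    simp only [hΔ₁, Matrix.add_mulVec, Matrix.sub_mulVec]
    rw [vanishes {0, 2} (by decide), vanishes {0, 3} (by decide), vanishes {0, 1, 2} (by decide),
      vanishes {0, 1, 3} (by decide), vanishes {0, 2, 3} (by decide), hΨ,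
      qreduce_zero_psi4_mulVec_v4, qreduce_zero_one_psi4_mulVec_v4]
    module
  have expectation : star v4 ⬝ᵥ Δ₁ *ᵥ v4 = -(1 / 2) := by
    rw [eigenvector, dotProduct_smul, star_v4_dotProduct_v4, smul_eq_mul, mul_one]
  have expectation_neg : star v4 ⬝ᵥ Δ₁ *ᵥ v4 < 0 := by
    rw [expectation]
    exact neg_neg_of_pos one_half_pos
  exact ⟨eigenvector, expectation, fun hpos =>
    (hpos.dotProduct_mulVec_nonneg v4).not_gt expectation_neg⟩
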